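/- Let m ∈ ℕ and let w be a (1/(m+1))-concise group-word in n variables. Then there exists a function f : ℕ → ℕ such that for every r ≥ 1 and every group G in which w takes precisely r values, the iterated commutator subgroup [w(G), G, ..., G] (with G repeated m times) has order at most f(r). -/

import Mathlib

/-- The set of `w`-values in `G`: images of the word `w` (an element of the free
group on `n` generators) under all homomorphisms `FreeGroup (Fin n) →* G`. -/
def wValues {n : ℕ} (w : FreeGroup (Fin n)) (G : Type*) [Group G] : Set G :=
  Set.range fun g : Fin n → G => FreeGroup.lift g w

/-- `G_w^* = G_w ∪ G_w⁻¹`. -/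
def wValuesStar {n : ℕ} (w : FreeGroup (Fin n)) (G : Type*) [Group G] : Set G :=
  wValues w G ∪ (wValues w G)⁻¹

/-- The verbal subgroup `w(G)` generated by all `w`-values. -/
def verbalSubgroup {n : ℕ} (w : FreeGroup (Fin n)) (G : Type*) [Group G] : Subgroup G :=
  Subgroup.closure (wValues w G)

/-- The iterated commutator subgroup `[H, G, ..., G]` with `G` repeated `k` times. -/
def iterCommSub (G : Type*) [Group G] (H : Subgroup G) : ℕ → Subgroup G
  | 0 => H
  | k + 1 => ⁅iterCommSub G H k, (⊤ : Subgroup G)⁆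

/-- The set of conjugates `x^S = {g⁻¹ x g : g ∈ S}`. -/
def conjSet {G : Type*} [Group G] (x : G) (S : Set G) : Set G :=
  (fun g => g⁻¹ * x * g) '' S

/-- `G` is an `FC(w)`-group: every conjugacy set `x^{G_w}` is finite. -/
def IsFCw {n : ℕ} (w : FreeGroup (Fin n)) (G : Type*) [Group G] : Prop :=
  ∀ x : G, (conjSet x (wValues w G)).Finite

/-- `G` is a `BFC(w)`-group: the sets `x^{G_w}` are finite of bounded size. -/
def IsBFCw {n : ℕ} (w : FreeGroup (Fin n)) (G : Type*) [Group G] : Prop :=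
  ∃ c : ℕ, ∀ x : G,
    (conjSet x (wValues w G)).Finite ∧ (conjSet x (wValues w G)).ncard ≤ c

/-- A subgroup `H` is `FC`-embedded in `G` if `x^H` is finite for every `x ∈ G`. -/
def IsFCEmbedded {G : Type*} [Group G] (H : Subgroup G) : Prop :=
  ∀ x : G, (conjSet x (H : Set G)).Finite

/-- A subgroup `H` is `BFC`-embedded in `G` if the sets `x^H` are finite of bounded size. -/
def IsBFCEmbedded {G : Type*} [Group G] (H : Subgroup G) : Prop :=
  ∃ d : ℕ, ∀ x : G,
    (conjSet x (H : Set G)).Finite ∧ (conjSet x (H : Set G)).ncard ≤ d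

/-- A word `w` is `(1/k)`-concise (`k ≥ 1`): in every group `G` with `G_w` finite,
the subgroup `[w(G), G, ..., G]` (with `G` repeated `k - 1` times) is finite. -/
def IsFracConcise {n : ℕ} (w : FreeGroup (Fin n)) (k : ℕ) : Prop :=
  ∀ (G : Type*) [Group G], (wValues w G).Finite →
    ((iterCommSub G (verbalSubgroup w G) (k - 1) : Subgroup G) : Set G).Finite

/-- A word `w` is `0`-concise: in every group `G` with `G_w` finite, some iterated
commutator subgroup `[w(G), G, ..., G]` is finite. -/
def IsZeroConcise {n : ℕ} (w : FreeGroup (Fin n)) : Prop :=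
  ∀ (G : Type*) [Group G], (wValues w G).Finite →
    ∃ k : ℕ, ((iterCommSub G (verbalSubgroup w G) k : Subgroup G) : Set G).Finite

/-- The commutator `[a, b] = a⁻¹ b⁻¹ a b`. -/
def pcomm {G : Type*} [Group G] (a b : G) : G := a⁻¹ * b⁻¹ * a * b

/-- The word `w(x_1, ..., x_n)` viewed in the free group on `n + m` generators. -/
def extendWord {n : ℕ} (m : ℕ) (w : FreeGroup (Fin n)) : FreeGroup (Fin (n + m)) :=
  FreeGroup.map (Fin.castAdd m) w

/-- The word `v = [w(x_1, ..., x_n), x_{n+1}, ..., x_{n+m}]`. -/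
def commWord {n : ℕ} (m : ℕ) (w : FreeGroup (Fin n)) : FreeGroup (Fin (n + m)) :=
  (List.ofFn fun i : Fin m => FreeGroup.of (Fin.natAdd n i)).foldl pcomm (extendWord m w)

/-- The iterated commutator `[y, b, ..., b]` with `b` repeated `k` times. -/
def iterPcomm {G : Type*} [Group G] (y b : G) : ℕ → G
  | 0 => y
  | k + 1 => pcomm (iterPcomm y b k) b

/-!
Let `v` be the word `[w, x_{n+1}, ..., x_{n+m}]`, so that `[w(G), G, ..., G] = v(G)`. If
`|v(G)| > d`, then `v`-values can be chosen greedily so that the products of the sublists of the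
first `d` of them already form a set of more than `d` elements. This set is the image of a finite
subset, depending only on `v` and `d`, of a free group of countable rank. If there were no bound,
we would get homomorphisms `φ k` from this free group to groups with at most `r` values of `w`,
whose `k`-th target has more than `k` elements in its `v`-subgroup. In the quotient of the free
group by the limit of the kernels along an ultrafilter, a finite set of elements is identified
exactly as it is by almost all `φ k`. So this quotient has at most `r` values of `w`, while its
`v`-subgroup has more than `d` elements for every `d`, contradicting the hypothesis on `w`.
-/

universe u u'

open scoped commutatorElement

section Words

variable {n : ℕ} {w : FreeGroup (Fin n)} {G H : Type*} [Group G] [Group H]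

theorem map_freeGroupLift {α : Type*} (φ : G →* H) (g : α → G) (x : FreeGroup α) :
    φ (FreeGroup.lift g x) = FreeGroup.lift (φ ∘ g) x := by
  have hcomp : φ.comp (FreeGroup.lift g) = FreeGroup.lift (φ ∘ g) := by
    ext i
    simp
  exact DFunLike.congr_fun hcomp x

theorem freeGroupLift_map {α β : Type*} (g : β → G) (f : α → β) (x : FreeGroup α) :
    FreeGroup.lift g (FreeGroup.map f x) = FreeGroup.lift (g ∘ f) x := by
  have hcomp : (FreeGroup.lift g).comp (FreeGroup.map f) = FreeGroup.lift (g ∘ f) := by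
    ext i
    simp
  exact DFunLike.congr_fun hcomp x

theorem mapsTo_wValues (φ : G →* H) : Set.MapsTo φ (wValues w G) (wValues w H) := by
  rintro _ ⟨g, rfl⟩
  exact ⟨φ ∘ g, (map_freeGroupLift φ g w).symm⟩

theorem image_wValues_of_surjective {φ : G →* H} (hφ : Function.Surjective φ) :
    φ '' wValues w G = wValues w H := by
  refine (mapsTo_wValues φ).image_subset.antisymm ?_
  rintro _ ⟨h, rfl⟩
  obtain ⟨g, rfl⟩ := hφ.comp_left h
  exact ⟨_, ⟨g, rfl⟩, map_freeGroupLift φ g w⟩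

theorem mapsTo_verbalSubgroup (φ : G →* H) :
    Set.MapsTo φ (verbalSubgroup w G) (verbalSubgroup w H) :=
  (Subgroup.closure_le ((verbalSubgroup w H).comap φ)).2 fun _ hx =>
    Subgroup.subset_closure (mapsTo_wValues φ hx)

end Words

section CommutatorWord

variable {n : ℕ} {G H : Type*} [Group G] [Group H]

theorem pcomm_eq_commutatorElement (a b : G) : pcomm a b = ⁅a⁻¹, b⁻¹⁆ := by
  simp only [pcomm, commutatorElement_def, inv_inv]

theorem map_pcomm (φ : G →* H) (a b : G) : φ (pcomm a b) = pcomm (φ a) (φ b) := by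
  simp only [pcomm, map_mul, map_inv]

theorem map_foldl_pcomm (φ : G →* H) (a : G) (L : List G) :
    φ (L.foldl pcomm a) = (L.map φ).foldl pcomm (φ a) := by
  rw [List.foldl_map]
  exact (List.foldl_hom φ fun x y => (map_pcomm φ x y).symm).symm

theorem conj_pcomm (a b c : G) : c * pcomm a b * c⁻¹ = (pcomm a c⁻¹)⁻¹ * pcomm a (b * c⁻¹) := by
  simp only [pcomm]
  group

instance normal_closure_image2_pcomm_univ (S : Set G) :
    (Subgroup.closure (Set.image2 pcomm S Set.univ)).Normal := by
  rw [← Subgroup.normalizer_eq_top_iff, ← top_le_iff, Subgroup.le_normalizer_closure_iff]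
  rintro c - _ ⟨a, ha, b, -, rfl⟩
  have hmem (g : G) : pcomm a g ∈ Subgroup.closure (Set.image2 pcomm S Set.univ) :=
    Subgroup.subset_closure (Set.mem_image2_of_mem ha (Set.mem_univ g))
  rw [conj_pcomm]
  exact mul_mem (inv_mem (hmem _)) (hmem _)

theorem commutator_closure_top (S : Set G) :
    ⁅Subgroup.closure S, (⊤ : Subgroup G)⁆ =
      Subgroup.closure (Set.image2 pcomm S Set.univ) := by
  set N := Subgroup.closure (Set.image2 pcomm S Set.univ) with hN
  apply le_antisymm
  · have hcentral :
        Subgroup.closure S ≤ (Subgroup.center (G ⧸ N)).comap (QuotientGroup.mk' N) := by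
      refine (Subgroup.closure_le _).2 fun a ha => Subgroup.mem_center_iff.2 fun q => ?_
      obtain ⟨b, rfl⟩ := QuotientGroup.mk'_surjective N q
      have hab : (b * a)⁻¹ * (a * b) ∈ N := by
        rw [mul_inv_rev, ← mul_assoc]
        exact Subgroup.subset_closure (Set.mem_image2_of_mem ha (Set.mem_univ b))
      exact QuotientGroup.eq.2 hab
    refine Subgroup.commutator_le.2 fun a ha b _ => (QuotientGroup.eq_one_iff _).1 ?_
    exact commutatorElement_eq_one_iff_mul_comm.2 (Subgroup.mem_center_iff.1 (hcentral ha) b).symm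
  · rw [hN, Subgroup.closure_le]
    rintro _ ⟨a, ha, b, -, rfl⟩
    rw [pcomm_eq_commutatorElement]
    exact Subgroup.commutator_mem_commutator (inv_mem (Subgroup.subset_closure ha))
      (Subgroup.mem_top _)

theorem commWord_zero (w : FreeGroup (Fin n)) : commWord 0 w = w := by
  simp [commWord, extendWord]

theorem commWord_succ (m : ℕ) (w : FreeGroup (Fin n)) :
    commWord (m + 1) w =
      pcomm (FreeGroup.map Fin.castSucc (commWord m w)) (FreeGroup.of (Fin.last (n + m))) := by
  have hfold : FreeGroup.map Fin.castSucc (commWord m w) =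
      (List.ofFn fun i : Fin m => FreeGroup.of (Fin.natAdd n i).castSucc).foldl pcomm
        (extendWord (m + 1) w) := by
    rw [commWord, map_foldl_pcomm, List.map_ofFn, extendWord, FreeGroup.map.comp]
    simp only [Function.comp_def, FreeGroup.map.of]
    rfl
  rw [hfold, commWord, List.ofFn_succ', List.concat_eq_append, List.foldl_concat]
  rfl

theorem wValues_commWord_succ (m : ℕ) (w : FreeGroup (Fin n)) :
    wValues (commWord (m + 1) w) G = Set.image2 pcomm (wValues (commWord m w) G) Set.univ := by
  have hlift (g : Fin (n + m + 1) → G) : FreeGroup.lift g (commWord (m + 1) w) =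
      pcomm (FreeGroup.lift (Fin.init g) (commWord m w)) (g (Fin.last (n + m))) := by
    rw [commWord_succ, map_pcomm, FreeGroup.lift_apply_of, freeGroupLift_map]
    rfl
  ext x
  constructor
  · rintro ⟨g, rfl⟩
    exact ⟨_, ⟨Fin.init g, rfl⟩, g (Fin.last (n + m)), Set.mem_univ _, (hlift g).symm⟩
  · rintro ⟨_, ⟨g, rfl⟩, b, -, rfl⟩
    refine ⟨Fin.snoc (α := fun _ => G) g b, (hlift _).trans ?_⟩
    rw [Fin.init_snoc]
    exact congrArg _ (Fin.snoc_last (α := fun _ => G) b g)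

theorem verbalSubgroup_commWord (m : ℕ) (w : FreeGroup (Fin n)) :
    verbalSubgroup (commWord m w) G = iterCommSub G (verbalSubgroup w G) m := by
  induction m with
  | zero => rw [commWord_zero, iterCommSub]
  | succ m ih =>
    rw [iterCommSub, ← ih, verbalSubgroup, verbalSubgroup, commutator_closure_top,
      wValues_commWord_succ]

end CommutatorWord

section Subproducts

variable {G H : Type*} [Group G] [Group H]

/-- The set of products of sublists of `s 0, ..., s (j - 1)`: the part of the subgroup generated by
the sequence `s` that can be reached in `j` steps, where the `i`-th step may multiply by `s i`. -/
def subproducts (s : ℕ → G) : ℕ → Set G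
  | 0 => {1}
  | j + 1 => subproducts s j ∪ (· * s j) '' subproducts s j

theorem finite_subproducts (s : ℕ → G) : ∀ j, (subproducts s j).Finite
  | 0 => Set.finite_singleton 1
  | j + 1 => (finite_subproducts s j).union ((finite_subproducts s j).image _)

theorem one_mem_subproducts (s : ℕ → G) : ∀ j, 1 ∈ subproducts s j
  | 0 => rfl
  | j + 1 => Or.inl (one_mem_subproducts s j)

theorem subproducts_subset {K : Subgroup G} {s : ℕ → G} (hs : ∀ i, s i ∈ K) :
    ∀ j, subproducts s j ⊆ K
  | 0 => Set.singleton_subset_iff.2 K.one_mem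
  | j + 1 => Set.union_subset (subproducts_subset hs j)
      (Set.image_subset_iff.2 fun _ hx => K.mul_mem (subproducts_subset hs j hx) (hs j))

theorem image_subproducts (φ : G →* H) (s : ℕ → G) (j : ℕ) :
    φ '' subproducts s j = subproducts (φ ∘ s) j := by
  induction j with
  | zero => simp only [subproducts, Set.image_singleton, map_one]
  | succ j ih =>
    simp only [subproducts, Set.image_union, ← ih, Set.image_image, map_mul, Function.comp_apply]

theorem closure_subset_of_mapsTo_mul {S X : Set G} (hX : X.Finite) (h1 : 1 ∈ X)
    (hmul : ∀ a ∈ S, Set.MapsTo (· * a) X X) : (Subgroup.closure S : Set G) ⊆ X := by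
  intro x hx
  induction hx using Subgroup.closure_induction_right with
  | one => exact h1
  | mul_right x _ a ha hx => exact hmul a ha hx
  | mul_inv_cancel x _ a ha hx =>
    obtain ⟨y, hy, rfl⟩ :=
      ((hX.injOn_iff_bijOn_of_mapsTo (hmul a ha)).1 (mul_left_injective a).injOn).surjOn hx
    simpa only [mul_inv_cancel_right] using hy

/-- The choice is greedy: `s j` moves the current set of subproducts out of itself as long as some
element of `S` does. -/
theorem exists_seq_mapsTo_mul_subproducts {S : Set G} (hS : S.Nonempty) :
    ∃ s : ℕ → G, (∀ j, s j ∈ S) ∧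
      ∀ j, Set.MapsTo (· * s j) (subproducts s j) (subproducts s j) →
        ∀ a ∈ S, Set.MapsTo (· * a) (subproducts s j) (subproducts s j) := by
  have hnext (X : Set G) :
      ∃ b ∈ S, Set.MapsTo (· * b) X X → ∀ a ∈ S, Set.MapsTo (· * a) X X := by
    by_cases! hX : ∃ b ∈ S, ¬ Set.MapsTo (· * b) X X
    · obtain ⟨b, hb, hbX⟩ := hX
      exact ⟨b, hb, fun h => absurd h hbX⟩
    · exact ⟨hS.some, hS.some_mem, fun _ => hX⟩
  choose next hnextS hnext using hnext
  let X : ℕ → Set G := fun j => (fun Y => Y ∪ (· * next Y) '' Y)^[j] {1}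
  have hX (j : ℕ) : subproducts (next ∘ X) j = X j := by
    induction j with
    | zero => rfl
    | succ j ih =>
      simp only [subproducts, ih, X, Function.comp_apply, Function.iterate_succ_apply']
  refine ⟨next ∘ X, fun j => hnextS _, fun j => ?_⟩
  rw [hX]
  exact hnext (X j)

theorem lt_encard_subproducts {S : Set G} {s : ℕ → G}
    (hs : ∀ j, Set.MapsTo (· * s j) (subproducts s j) (subproducts s j) →
      ∀ a ∈ S, Set.MapsTo (· * a) (subproducts s j) (subproducts s j))
    {j : ℕ} (hj : j < (Subgroup.closure S : Set G).encard) : j < (subproducts s j).encard := by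
  induction j with
  | zero => simp [subproducts]
  | succ j ih =>
    have hfin := finite_subproducts s j
    have hsub : subproducts s j ⊆ subproducts s (j + 1) := Set.subset_union_left
    by_cases hstable : Set.MapsTo (· * s j) (subproducts s j) (subproducts s j)
    · have hclosure := closure_subset_of_mapsTo_mul hfin (one_mem_subproducts s j) (hs j hstable)
      exact hj.trans_le (Set.encard_mono (hclosure.trans hsub))
    · have hssub : subproducts s j ⊂ subproducts s (j + 1) :=
        ⟨hsub, fun hle => hstable (Set.image_subset_iff.1 (Set.subset_union_right.trans hle))⟩
      have hlt : j < (subproducts s j).encard := ih ((Nat.cast_lt.2 j.lt_succ_self).trans hj)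
      calc ((j + 1 : ℕ) : ℕ∞) = j + 1 := Nat.cast_succ j
        _ ≤ (subproducts s j).encard := Order.add_one_le_of_lt hlt
        _ < (subproducts s (j + 1)).encard := hfin.encard_lt_encard hssub

end Subproducts

section GenericValues

variable {ι G : Type*} [Group G] {l : ℕ}

/-- The value of the word `v` at a tuple of free generators reserved for the index `i`: a family of
independent indeterminate `v`-values. -/
def genericValue (v : FreeGroup (Fin l)) (i : ι) : FreeGroup (ι × Fin l) :=
  FreeGroup.map (Prod.mk i) v

theorem genericValue_mem_wValues (v : FreeGroup (Fin l)) (i : ι) :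
    genericValue v i ∈ wValues v (FreeGroup (ι × Fin l)) :=
  ⟨fun j => FreeGroup.of (i, j), (DFunLike.congr_fun FreeGroup.map_eq_lift v).symm⟩

theorem exists_hom_genericValue_eq {v : FreeGroup (Fin l)} {s : ι → G}
    (hs : ∀ i, s i ∈ wValues v G) :
    ∃ φ : FreeGroup (ι × Fin l) →* G, ∀ i, φ (genericValue v i) = s i := by
  choose g hg using hs
  refine ⟨FreeGroup.lift fun p => g p.1 p.2, fun i => ?_⟩
  rw [← hg, genericValue, freeGroupLift_map]
  rfl

variable (G) in
theorem exists_hom_lt_encard_image_subproducts (v : FreeGroup (Fin l)) (e : ℕ ≃ ι) :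
    ∃ φ : FreeGroup (ι × Fin l) →* G, ∀ j : ℕ, j < (verbalSubgroup v G : Set G).encard →
      j < (φ '' subproducts (genericValue v ∘ e) j).encard := by
  have hne : (wValues v G).Nonempty := Set.range_nonempty _
  obtain ⟨s, hs, hstable⟩ := exists_seq_mapsTo_mul_subproducts hne
  obtain ⟨φ, hφ⟩ := exists_hom_genericValue_eq fun i => hs (e.symm i)
  refine ⟨φ, fun j hj => ?_⟩
  have hcomp : φ ∘ genericValue v ∘ e = s := by
    ext i
    simp [hφ]
  rw [image_subproducts, hcomp]
  exact lt_encard_subproducts hstable hj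

end GenericValues

section Ultralimit

theorem encard_image_eq_of_forall_eq_iff {α β γ : Type*} {T : Set α} {f : α → β} {g : α → γ}
    (h : ∀ x ∈ T, ∀ y ∈ T, f x = f y ↔ g x = g y) : (f '' T).encard = (g '' T).encard := by
  obtain ⟨R, hRT, hR⟩ := Set.exists_subset_bijOn T f
  have hinj : Set.InjOn g R := fun x hx y hy hxy =>
    hR.injOn hx hy ((h x (hRT hx) y (hRT hy)).2 hxy)
  have himage : g '' R = g '' T := by
    refine (Set.image_mono hRT).antisymm ?_
    rintro _ ⟨x, hx, rfl⟩
    obtain ⟨y, hy, hyx⟩ := hR.surjOn (Set.mem_image_of_mem f hx)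
    exact ⟨y, hy, (h y (hRT hy) x hx).1 hyx⟩
  rw [← hR.image_eq, hR.injOn.encard_image, ← himage, hinj.encard_image]

variable {ι F : Type*} [Group F] {G : ι → Type*} [∀ k, Group (G k)]

/-- The congruence on `F` identifying two elements when `φ k` identifies them for `l`-almost all
`k`. Its quotient is the limit of the groups `φ k (F)` along `l` as marked groups. -/
def eventualCon (l : Filter ι) (φ : ∀ k, F →* G k) : Con F where
  r x y := ∀ᶠ k in l, φ k x = φ k y
  iseqv :=
    { refl := fun _ => .of_forall fun _ => rfl
      symm := fun h => h.mono fun _ => Eq.symm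
      trans := fun h₁ h₂ => h₁.mp (h₂.mono fun _ e₂ e₁ => e₁.trans e₂) }
  mul' := fun h₁ h₂ => h₁.mp (h₂.mono fun k e₂ e₁ => by rw [map_mul, map_mul, e₁, e₂])

variable (U : Ultrafilter ι) (φ : ∀ k, F →* G k)

theorem eventually_eq_iff_mk'_eventualCon_eq (x y : F) :
    ∀ᶠ k in U, φ k x = φ k y ↔ (eventualCon U φ).mk' x = (eventualCon U φ).mk' y := by
  have hmk : (eventualCon U φ).mk' x = (eventualCon U φ).mk' y ↔ ∀ᶠ k in U, φ k x = φ k y :=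
    Con.eq _
  by_cases h : ∀ᶠ k in U, φ k x = φ k y
  · exact h.mono fun k hk => iff_of_true hk (hmk.2 h)
  · exact (Ultrafilter.eventually_not.2 h).mono fun k hk => iff_of_false hk (mt hmk.1 h)

theorem eventually_encard_image_eq {T : Set F} (hT : T.Finite) :
    ∀ᶠ k in U, (φ k '' T).encard = (((eventualCon U φ).mk') '' T).encard := by
  have hT_iff : ∀ᶠ k in U, ∀ x ∈ T, ∀ y ∈ T,
      φ k x = φ k y ↔ (eventualCon U φ).mk' x = (eventualCon U φ).mk' y :=
    hT.eventually_all.2 fun x _ => hT.eventually_all.2 fun y _ =>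
      eventually_eq_iff_mk'_eventualCon_eq U φ x y
  exact hT_iff.mono fun k => encard_image_eq_of_forall_eq_iff

theorem encard_wValues_eventualCon_le {n : ℕ} {w : FreeGroup (Fin n)} {r : ℕ}
    (hr : ∀ᶠ k in U, (wValues w (G k)).encard ≤ r) :
    (wValues w (eventualCon U φ).Quotient).encard ≤ r := by
  by_contra! hlt
  have hmany : ∃ T ⊆ ((eventualCon U φ).mk') '' wValues w F, T.Finite ∧ r < T.encard := by
    rw [image_wValues_of_surjective Con.mk'_surjective]
    obtain ⟨T, hT, hcard⟩ := Set.exists_subset_encard_eq (Order.add_one_le_of_lt hlt)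
    refine ⟨T, hT, Set.finite_of_encard_eq_coe hcard, ?_⟩
    rw [hcard]
    exact_mod_cast r.lt_succ_self
  obtain ⟨T, hT, hTfin, hTcard⟩ := Set.exists_subset_image_finite_and.1 hmany
  obtain ⟨k, hk, hrk⟩ := ((eventually_encard_image_eq U φ hTfin).and hr).exists
  have hle : (φ k '' T).encard ≤ r :=
    (Set.encard_mono (((mapsTo_wValues (φ k)).mono_left hT).image_subset)).trans hrk
  exact (hk ▸ hTcard).not_ge hle

end Ultralimit

theorem exists_encard_verbalSubgroup_le {n l : ℕ} {w : FreeGroup (Fin n)} {v : FreeGroup (Fin l)}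
    (hfin : ∀ (G : Type u) [Group G], (wValues w G).Finite → (verbalSubgroup v G : Set G).Finite)
    (r : ℕ) :
    ∃ b : ℕ, ∀ (G : Type u') [Group G], (wValues w G).encard ≤ r →
      (verbalSubgroup v G : Set G).encard ≤ b := by
  by_contra! hunbounded
  choose G hG hr hlarge using hunbounded
  -- `ULift` puts the free group in the universe of `hfin`; the groups `G k` may live in another.
  let e : ℕ ≃ ULift.{u} ℕ := Equiv.ulift.symm
  choose φ hφ using fun k => exists_hom_lt_encard_image_subproducts (G k) v e
  let U := Filter.hyperfilter ℕ
  let c := eventualCon U φ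
  have hcfin : (verbalSubgroup v c.Quotient : Set c.Quotient).Finite :=
    hfin _ (Set.finite_of_encard_le_coe (encard_wValues_eventualCon_le U φ (.of_forall hr)))
  obtain ⟨d, hd⟩ := hcfin.exists_encard_eq_coe
  let T := subproducts (genericValue v ∘ e) d
  have hT : ((c.mk') '' T).encard ≤ d := by
    rw [← hd]
    refine Set.encard_mono (((mapsTo_verbalSubgroup c.mk').mono_left ?_).image_subset)
    exact subproducts_subset (fun i => Subgroup.subset_closure (genericValue_mem_wValues v _)) d
  have hge : ∀ᶠ k in U, d ≤ k := Nat.hyperfilter_le_atTop (Filter.eventually_ge_atTop d)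
  obtain ⟨k, hk, hdk⟩ :=
    ((eventually_encard_image_eq U φ (finite_subproducts (genericValue v ∘ e) d)).and hge).exists
  have hlt : d < (φ k '' T).encard := hφ k d ((Nat.cast_le.2 hdk).trans_lt (hlarge k))
  exact (hk ▸ hlt).not_ge hT

/-- if `w` is `(1/(m+1))`-concise, there is `f : ℕ → ℕ` such that in every
group in which `w` takes precisely `r ≥ 1` values, `[w(G), G, ..., G]` (`G` repeated `m`
times) has order at most `f r`. -/
theorem statement_4 {n : ℕ} (m : ℕ) (w : FreeGroup (Fin n))
    (hw : IsFracConcise w (m + 1)) :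
    ∃ f : ℕ → ℕ, ∀ r : ℕ, 1 ≤ r → ∀ (G : Type*) [Group G],
      (wValues w G).Finite → (wValues w G).ncard = r →
      ((iterCommSub G (verbalSubgroup w G) m : Subgroup G) : Set G).Finite ∧
        ((iterCommSub G (verbalSubgroup w G) m : Subgroup G) : Set G).ncard ≤ f r := by
  have hfin (G : Type _) [Group G] (hG : (wValues w G).Finite) :
      (verbalSubgroup (commWord m w) G : Set G).Finite := by
    rw [verbalSubgroup_commWord]
    exact hw G hG
  choose f hf using exists_encard_verbalSubgroup_le hfin
  refine ⟨f, fun r _ G _ hG hr => ?_⟩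
  have hbound : (verbalSubgroup (commWord m w) G : Set G).encard ≤ f r :=
    hf r G (by rw [← hr, hG.cast_ncard_eq])
  rw [verbalSubgroup_commWord] at hbound
  exact Set.encard_le_coe_iff_finite_ncard_le.1 hbound
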